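/- Let M : S → ℂ with M(1) = 1 and let L be its admissible cumulants. Then the cumulant generating function satisfies L{z,w} = L{z,0} + (M_⋆{z,w} − M{z,0}) ⋆ M_⋆^{−1}{z,w} in A(S), where M_⋆{z,w} = (M{z,w})_{⋆ M^{−1}{z,0}}, M^{−1}{z,0} is the convolution inverse of M{z,0} (supported on S(z)), and M_⋆^{−1}{z,w} is the convolution inverse of M_⋆{z,w} in A(S). -/

import Mathlib

/-- The two-letter alphabet `{z, w}`. -/
inductive Letter | z | w
deriving DecidableEq

/-- Words: elements of the free monoid `S = FS({z,w})`. -/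
abbrev Word := List Letter

/-- The convolution product of the semigroup algebra `A(S)`:
`(f ⋆ g)(s) = Σ_{uv = s} f(u) g(v)`. -/
noncomputable def conv (f g : Word → ℂ) (s : Word) : ℂ :=
  ∑ i ∈ Finset.range (s.length + 1), f (s.take i) * g (s.drop i)

/-- `G` is the prefix-accumulating form of the composition `f_{⋆g}` of Definition 6.2:
`G(pre, s) = f(pre ++ s)` if `s` has no `w`, and if `s = z^a w^k rest` with `k ≥ 1`
maximal, the leading `z`-run of `s` is split in all possible ways, each removed part
`z^{a-c}` contributing a factor `g(z^{a-c})`.  Then `f_{⋆g}(s) = G([], s)`. -/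
def IsStarAux (f g : Word → ℂ) (G : Word → Word → ℂ) : Prop :=
  (∀ pre s : Word, Letter.w ∉ s → G pre s = f (pre ++ s)) ∧
    ∀ (pre : Word) (a k : ℕ) (rest : Word), 1 ≤ k → rest.head? ≠ some Letter.w →
      G pre (List.replicate a Letter.z ++ List.replicate k Letter.w ++ rest) =
        ∑ c ∈ Finset.range (a + 1),
          g (List.replicate (a - c) Letter.z) *
            G (pre ++ List.replicate c Letter.z ++ List.replicate k Letter.w) rest

/-- `n(s)! = n₁!n₂!⋯n_p!` for `s = z^{n₁} w^{k₁} z^{n₂} ⋯ w^{k_{p−1}} z^{n_p}`: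
the product of the factorials of the lengths of the maximal `z`-runs of `s`. -/
def nFact (s : Word) : ℕ :=
  ((s.splitOn Letter.w).map fun r => r.length.factorial).prod

/-- `s` is a partition of the index set of a word into blocks; see `IsCumulants`. -/
def letterAt (s : Word) (j : ℕ) : Letter := s.getD j Letter.z

/-- `P` is a partition of the finite set of positions `g ⊆ ℕ` into nonempty blocks. -/
def IsPartitionOn (g : Finset ℕ) (P : Finset (Finset ℕ)) : Prop :=
  (∀ b ∈ P, b.Nonempty) ∧ (P : Set (Finset ℕ)).PairwiseDisjoint id ∧ P.sup id = g

/-- The position `j` is inner with respect to the block `b`. -/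
def InnerPos (j : ℕ) (b : Finset ℕ) : Prop :=
  j ∉ b ∧ ∃ i ∈ b, ∃ k ∈ b, i < j ∧ j < k

/-- A partition is admissible if no block contains a letter `w` that is inner
with respect to another block. -/
def Admissible (s : Word) (P : Finset (Finset ℕ)) : Prop :=
  ∀ b ∈ P, ∀ b' ∈ P, b ≠ b' → ∀ j ∈ b, letterAt s j = Letter.w → ¬ InnerPos j b'

open scoped Classical in
/-- The set `AP(s)` of admissible partitions of the positions `g` of the word `s`. -/
noncomputable def APfin (s : Word) (g : Finset ℕ) : Finset (Finset (Finset ℕ)) :=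
  g.powerset.powerset.filter fun P => IsPartitionOn g P ∧ Admissible s P

/-- The subword of `s` determined by a set of positions `b`. -/
def wordOf (s : Word) (b : Finset ℕ) : Word :=
  (b.sort (· ≤ ·)).map (letterAt s)

/-- `L` is the family of admissible cumulants of the moment function `M`. -/
def IsCumulants (M L : Word → ℂ) : Prop :=
  ∀ s : Word, s ≠ [] →
    M s = ∑ P ∈ APfin s (Finset.range s.length), ∏ b ∈ P, L (wordOf s b)

/-- The moment generating function `M{z,w}(s) = M(s)/n(s)!`. -/
noncomputable def genFun (M : Word → ℂ) (s : Word) : ℂ := M s / (nFact s : ℂ)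

open scoped Classical in
/-- The restriction `f{z,0}` of `f` to `S(z)`, extended by `0`. -/
noncomputable def restrZ (f : Word → ℂ) (s : Word) : ℂ :=
  if Letter.w ∈ s then 0 else f s

open scoped Classical in
/-- `δf = f − f{z,0}`. -/
noncomputable def deltaF (f : Word → ℂ) (s : Word) : ℂ :=
  if Letter.w ∈ s then f s else 0

section Helpers

open Finset

open scoped Classical in
noncomputable def partsOn (g : Finset ℕ) : Finset (Finset (Finset ℕ)) :=
  g.powerset.powerset.filter fun P => IsPartitionOn g P

/-- Partition sum. -/
noncomputable def ZZ (φ : Finset ℕ → ℂ) (g : Finset ℕ) : ℂ :=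
  ∑ P ∈ partsOn g, ∏ b ∈ P, φ b

lemma mem_partsOn {g : Finset ℕ} {P : Finset (Finset ℕ)} :
    P ∈ partsOn g ↔ IsPartitionOn g P := by
  classical
  unfold partsOn
  rw [Finset.mem_filter]
  refine ⟨fun h => h.2, fun h => ⟨?_, h⟩⟩
  rw [Finset.mem_powerset]
  intro b hb
  rw [Finset.mem_powerset]
  obtain ⟨h1, h2, h3⟩ := h
  rw [← h3]
  exact Finset.le_sup (f := id) hb

lemma ZZ_empty (φ : Finset ℕ → ℂ) : ZZ φ ∅ = 1 := by
  have : partsOn ∅ = {∅} := by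
    ext P
    rw [mem_partsOn, Finset.mem_singleton]
    constructor
    · rintro ⟨h1, h2, h3⟩
      rw [Finset.eq_empty_iff_forall_notMem]
      intro b hb
      have := Finset.le_sup (f := id) hb
      rw [h3] at this
      have h := h1 b hb
      simp at this
      simp [this] at h
    · rintro rfl
      exact ⟨by simp, by simp, by simp⟩
  simp [ZZ, this]

lemma ZZ_rec (φ : Finset ℕ → ℂ) (g : Finset ℕ) (x : ℕ) (hx : x ∈ g) :
    ZZ φ g = ∑ b ∈ g.powerset.filter (fun b => x ∈ b), φ b * ZZ φ (g \ b) := by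
  unfold ZZ
  simp_rw [Finset.mul_sum]
  rw [Finset.sum_sigma']
  symm
  refine Finset.sum_bij (fun y _ => insert y.1 y.2) ?_ ?_ ?_ ?_
  · rintro ⟨b, P⟩ h
    simp only [Finset.mem_sigma, Finset.mem_filter, Finset.mem_powerset, mem_partsOn] at h ⊢
    obtain ⟨⟨hb, hxb⟩, h1, h2, h3⟩ := h
    have hdis : ∀ c ∈ P, Disjoint c b := by
      intro c hc
      have : c ≤ g \ b := by rw [← h3]; exact Finset.le_sup (f := id) hc
      exact (Finset.disjoint_sdiff.mono_right this).symm
    refine ⟨?_, ?_, ?_⟩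
    · intro c hc
      rcases Finset.mem_insert.1 hc with rfl | hc
      · exact ⟨x, hxb⟩
      · exact h1 c hc
    · rw [Finset.coe_insert]
      refine h2.insert ?_
      intro c hc _
      exact (hdis c hc).symm
    · rw [Finset.sup_insert, h3]
      simpa using hb
  · rintro ⟨b, P⟩ h ⟨b', P'⟩ h' heq
    simp only [Finset.mem_sigma, Finset.mem_filter, Finset.mem_powerset, mem_partsOn] at h h' heq
    obtain ⟨⟨hb, hxb⟩, h1, h2, h3⟩ := h
    obtain ⟨⟨hb', hxb'⟩, h1', h2', h3'⟩ := h'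
    have key : ∀ c ∈ P, x ∉ c := by
      intro c hc hxc
      have : c ≤ g \ b := by rw [← h3]; exact Finset.le_sup (f := id) hc
      exact (Finset.mem_sdiff.1 (this hxc)).2 hxb
    have key' : ∀ c ∈ P', x ∉ c := by
      intro c hc hxc
      have : c ≤ g \ b' := by rw [← h3']; exact Finset.le_sup (f := id) hc
      exact (Finset.mem_sdiff.1 (this hxc)).2 hxb'
    have hbb : b = b' := by
      have : b ∈ insert b' P' := by rw [← heq]; exact Finset.mem_insert_self _ _
      rcases Finset.mem_insert.1 this with h | h
      · exact h
      · exact absurd hxb (key' b h)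
    subst hbb
    have hn : b ∉ P := fun h => key b h hxb
    have hn' : b ∉ P' := fun h => key' b h hxb
    have : P = P' := by
      rw [← Finset.erase_insert hn, heq, Finset.erase_insert hn']
    subst this
    rfl
  · intro P hP
    rw [mem_partsOn] at hP
    obtain ⟨h1, h2, h3⟩ := hP
    have : x ∈ P.sup id := by rw [h3]; exact hx
    rw [Finset.mem_sup] at this
    obtain ⟨b, hb, hxb⟩ := this
    refine ⟨⟨b, P.erase b⟩, ?_, by simpa using Finset.insert_erase hb⟩
    simp only [Finset.mem_sigma, Finset.mem_filter, Finset.mem_powerset, mem_partsOn]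
    refine ⟨⟨?_, hxb⟩, ?_, ?_, ?_⟩
    · rw [← h3]; exact Finset.le_sup (f := id) hb
    · intro c hc; exact h1 c (Finset.mem_of_mem_erase hc)
    · exact h2.subset (by simp)
    · have e1 : g = b ∪ (P.erase b).sup id := by
        rw [← h3]
        conv_lhs => rw [← Finset.insert_erase hb]
        rw [Finset.sup_insert]; rfl
      have e2 : Disjoint b ((P.erase b).sup id) := by
        rw [Finset.disjoint_sup_right]
        intro c hc
        exact h2 hb (Finset.mem_of_mem_erase hc) (Finset.ne_of_mem_erase hc).symm
      rw [e1, Finset.union_sdiff_cancel_left e2]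
  · rintro ⟨b, P⟩ h
    simp only [Finset.mem_sigma, Finset.mem_filter, Finset.mem_powerset, mem_partsOn] at h ⊢
    obtain ⟨⟨hb, hxb⟩, h1, h2, h3⟩ := h
    rw [Finset.prod_insert]
    intro hc
    have : b ≤ g \ b := by rw [← h3]; exact Finset.le_sup (f := id) hc
    exact (Finset.mem_sdiff.1 (this hxb)).2 hxb

lemma ZZ_image (φ φ' : Finset ℕ → ℂ) (e : ℕ → ℕ) : ∀ (n : ℕ) (g : Finset ℕ), g.card = n →
    Set.InjOn e g → (∀ b ⊆ g, φ' (b.image e) = φ b) → ZZ φ' (g.image e) = ZZ φ g := by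
  intro n
  induction n using Nat.strong_induction_on with
  | _ n ih =>
  intro g hn he hφ
  rcases g.eq_empty_or_nonempty with rfl | ⟨x, hx⟩
  · simp [ZZ_empty]
  rw [ZZ_rec φ g x hx, ZZ_rec φ' _ (e x) (Finset.mem_image_of_mem e hx)]
  symm
  refine Finset.sum_bij (fun b _ => b.image e) ?_ ?_ ?_ ?_
  · intro b hb
    simp only [Finset.mem_filter, Finset.mem_powerset] at hb ⊢
    exact ⟨Finset.image_subset_image hb.1, Finset.mem_image_of_mem e hb.2⟩
  · intro b hb b' hb' h
    simp only [Finset.mem_filter, Finset.mem_powerset] at hb hb'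
    have h2 : Set.image e (b : Set ℕ) = Set.image e (b' : Set ℕ) := by
      rw [← Finset.coe_image, ← Finset.coe_image, h]
    have := (he.image_eq_image_iff (by exact_mod_cast hb.1) (by exact_mod_cast hb'.1)).1 h2
    exact_mod_cast this
  · intro c hc
    simp only [Finset.mem_filter, Finset.mem_powerset] at hc
    obtain ⟨b, hb, rfl⟩ := Finset.subset_image_iff.1 hc.1
    refine ⟨b, ?_, rfl⟩
    simp only [Finset.mem_filter, Finset.mem_powerset]
    refine ⟨by exact_mod_cast hb, ?_⟩
    obtain ⟨y, hy, hxy⟩ := Finset.mem_image.1 hc.2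
    have := he (hb hy) hx hxy
    rwa [← this]
  · intro b hb
    simp only [Finset.mem_filter, Finset.mem_powerset] at hb
    rw [hφ b hb.1]
    congr 1
    have : g.image e \ b.image e = (g \ b).image e := by
      ext y
      simp only [Finset.mem_sdiff, Finset.mem_image]
      constructor
      · rintro ⟨⟨u, hu, rfl⟩, h⟩
        exact ⟨u, ⟨hu, fun hub => h ⟨u, hub, rfl⟩⟩, rfl⟩
      · rintro ⟨u, ⟨hu, hub⟩, rfl⟩
        refine ⟨⟨u, hu, rfl⟩, ?_⟩
        rintro ⟨v, hv, hvu⟩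
        exact hub (he (hb.1 hv) hu hvu ▸ hv)
    rw [this]
    symm
    refine ih (g \ b).card ?_ _ rfl (he.mono (by simp)) (fun c hc => hφ c (hc.trans (by simp)))
    rw [← hn]
    exact Finset.card_lt_card (Finset.ssubset_iff_subset_ne.2
      ⟨Finset.sdiff_subset, fun h => (Finset.mem_sdiff.1 (h.symm ▸ hx)).2 hb.2⟩)

lemma ZZ_union (φ : Finset ℕ → ℂ) (g2 : Finset ℕ) : ∀ (n : ℕ) (g1 : Finset ℕ), g1.card = n →
    Disjoint g1 g2 → (∀ b ⊆ g1 ∪ g2, ¬ b ⊆ g1 → ¬ b ⊆ g2 → φ b = 0) →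
    ZZ φ (g1 ∪ g2) = ZZ φ g1 * ZZ φ g2 := by
  intro n
  induction n using Nat.strong_induction_on with
  | _ n ih =>
  intro g1 hn hd hφ
  rcases g1.eq_empty_or_nonempty with rfl | ⟨x, hx⟩
  · simp [ZZ_empty]
  rw [ZZ_rec φ g1 x hx, ZZ_rec φ _ x (Finset.mem_union_left _ hx), Finset.sum_mul]
  symm
  refine Finset.sum_subset_zero_on_sdiff ?_ ?_ ?_
  · intro b hb
    simp only [Finset.mem_filter, Finset.mem_powerset] at hb ⊢
    exact ⟨hb.1.trans Finset.subset_union_left, hb.2⟩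
  · intro b hb
    simp only [Finset.mem_sdiff, Finset.mem_filter, Finset.mem_powerset] at hb
    rw [hφ b hb.1.1 (fun h => hb.2 ⟨h, hb.1.2⟩)
      (fun h => Finset.disjoint_left.1 hd hx (h hb.1.2)), zero_mul]
  · intro b hb
    simp only [Finset.mem_filter, Finset.mem_powerset] at hb
    rw [mul_assoc]
    congr 1
    have : (g1 ∪ g2) \ b = (g1 \ b) ∪ g2 := by
      rw [Finset.union_sdiff_distrib]
      congr 1
      exact Finset.sdiff_eq_self_of_disjoint (hd.mono_left hb.1).symm
    rw [this]
    symm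
    refine ih (g1 \ b).card ?_ _ rfl (hd.mono_left (by simp)) ?_
    · rw [← hn]
      exact Finset.card_lt_card (Finset.ssubset_iff_subset_ne.2
        ⟨Finset.sdiff_subset, fun h => (Finset.mem_sdiff.1 (h.symm ▸ hx)).2 hb.2⟩)
    · intro c hc hc1 hc2
      refine hφ c (hc.trans (Finset.union_subset_union_left Finset.sdiff_subset)) ?_ hc2
      intro hcg
      apply hc1
      intro y hy
      rcases Finset.mem_union.1 (hc hy) with h | h
      · exact h
      · exact absurd h (Finset.disjoint_left.1 hd (hcg hy))

lemma sum_powerset_disj (I J : Finset ℕ) (h : Disjoint I J) (F : Finset ℕ → ℂ) :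
    ∑ A ∈ (I ∪ J).powerset, F A = ∑ A ∈ I.powerset, ∑ B ∈ J.powerset, F (A ∪ B) := by
  induction I using Finset.induction_on generalizing F with
  | empty => simp
  | insert x I hx ih =>
    rw [Finset.disjoint_insert_left] at h
    rw [Finset.insert_union, Finset.sum_powerset_insert (by simp [hx, h.1]),
      Finset.sum_powerset_insert hx, ih h.2, ih h.2]
    simp

lemma sort_eq_of (b : Finset ℕ) (l : List ℕ) (hl : l.Pairwise (· < ·)) (hm : ∀ x, x ∈ l ↔ x ∈ b) :
    b.sort (· ≤ ·) = l := by
  have hb : b = l.toFinset := by ext x; simp [hm]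
  subst hb
  refine (List.toFinset_sort (· ≤ ·) (hl.imp (fun h => ne_of_lt h))).2 (hl.imp fun h => le_of_lt h)

/-- A block is good if no `w` is inner to it. -/
def Good (s : Word) (b : Finset ℕ) : Prop :=
  ∀ j, letterAt s j = Letter.w → ¬ InnerPos j b

open scoped Classical in
noncomputable def phi (L : Word → ℂ) (s : Word) (b : Finset ℕ) : ℂ :=
  if Good s b then L (wordOf s b) else 0

lemma admissible_iff (s : Word) (g : Finset ℕ) (P : Finset (Finset ℕ)) (hP : IsPartitionOn g P)
    (hg : ∀ j, letterAt s j = Letter.w → j ∉ g → ¬ ∃ i ∈ g, ∃ k ∈ g, i < j ∧ j < k) :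
    Admissible s P ↔ ∀ b ∈ P, Good s b := by
  obtain ⟨h1, h2, h3⟩ := hP
  constructor
  · intro h b hb j hj hin
    have hbg : b ⊆ g := by rw [← h3]; exact Finset.le_sup (f := id) hb
    by_cases hjg : j ∈ g
    · rw [← h3, Finset.mem_sup] at hjg
      obtain ⟨c, hc, hjc⟩ := hjg
      refine h c hc b hb ?_ j hjc hj hin
      rintro rfl
      exact hin.1 hjc
    · obtain ⟨_, i, hi, k, hk, hik⟩ := hin
      exact hg j hj hjg ⟨i, hbg hi, k, hbg hk, hik⟩
  · intro h b _ b' hb' _ j _ hjw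
    exact h b' hb' j hjw

lemma letterAt_lt {s : Word} {j : ℕ} (h : letterAt s j = Letter.w) : j < s.length := by
  by_contra hc
  rw [letterAt, List.getD_eq_default _ _ (by omega)] at h
  cases h

lemma M_eq_ZZ (M L : Word → ℂ) (hM1 : M [] = 1) (hL : IsCumulants M L) (s : Word) :
    M s = ZZ (phi L s) (Finset.range s.length) := by
  classical
  by_cases hs : s = []
  · subst hs; simp [ZZ_empty, hM1]
  rw [hL s hs, ZZ, APfin, partsOn, ← Finset.filter_filter, Finset.sum_filter]
  refine Finset.sum_congr rfl ?_
  intro P hP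
  rw [Finset.mem_filter] at hP
  have := admissible_iff s _ P hP.2 (by
    intro j hj hjg
    exact absurd (letterAt_lt hj) (by simpa using hjg))
  rw [this]
  split_ifs with h
  · refine Finset.prod_congr rfl ?_
    intro b hb
    rw [phi, if_pos (h b hb)]
  · push Not at h
    obtain ⟨b, hb, hbad⟩ := h
    exact (Finset.prod_eq_zero hb (by rw [phi, if_neg hbad])).symm

lemma relabel (M L : Word → ℂ) (hM1 : M [] = 1) (hL : IsCumulants M L) (s : Word) (g : Finset ℕ)
    (hg : ∀ j, letterAt s j = Letter.w → j ∉ g → ¬ ∃ i ∈ g, ∃ k ∈ g, i < j ∧ j < k) :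
    ZZ (phi L s) g = M (wordOf s g) := by
  rw [M_eq_ZZ M L hM1 hL]
  set l := g.sort (· ≤ ·) with hl
  have hlen : (wordOf s g).length = l.length := by simp [wordOf, hl]
  set e : ℕ → ℕ := fun i => l.getD i 0 with he
  have hei : ∀ i (h : i < l.length), e i = l[i] := fun i h => by simp [he, h]
  have hmono : StrictMonoOn e (Finset.range l.length : Finset ℕ) := by
    intro i hi j hj hij
    simp only [Finset.coe_range, Set.mem_Iio] at hi hj
    rw [hei i hi, hei j hj]
    have := (Finset.sortedLT_sort g).pairwise
    exact List.pairwise_iff_getElem.1 this i j hi hj hij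
  have himg : (Finset.range l.length).image e = g := by
    ext y
    rw [Finset.mem_image, ← Finset.mem_sort (· ≤ ·), ← hl, List.mem_iff_getElem]
    constructor
    · rintro ⟨i, hi, rfl⟩
      exact ⟨i, by simpa using hi, (hei i (by simpa using hi)).symm⟩
    · rintro ⟨i, hi, rfl⟩
      exact ⟨i, by simpa using hi, hei i hi⟩
  have hlet : ∀ i < l.length, letterAt (wordOf s g) i = letterAt s (e i) := by
    intro i hi
    rw [hei i hi]
    have : wordOf s g = l.map (letterAt s) := rfl
    rw [this, letterAt]
    simp [hi]
  rw [hlen]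
  conv_lhs => rw [← himg]
  refine ZZ_image _ _ e _ _ rfl hmono.injOn ?_
  intro b hb
  have hmb : StrictMonoOn e b := hmono.mono (by exact_mod_cast hb)
  have hbl : ∀ i ∈ b, i < l.length := fun i hi => by simpa using hb hi
  have hw : wordOf s (b.image e) = wordOf (wordOf s g) b := by
    unfold wordOf
    have hsort : (b.image e).sort (· ≤ ·) = (b.sort (· ≤ ·)).map e := by
      refine sort_eq_of _ _ ?_ (by simp)
      rw [List.pairwise_map]
      refine (Finset.sortedLT_sort b).pairwise.imp_of_mem ?_
      intro x y hx hy hxy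
      exact hmb (by simpa using hx) (by simpa using hy) hxy
    rw [hsort, List.map_map]
    refine List.map_congr_left ?_
    intro i hi
    exact (hlet i (hbl i ((Finset.mem_sort _).1 hi))).symm
  have hgood : Good s (b.image e) ↔ Good (wordOf s g) b := by
    constructor
    · rintro h j hj ⟨hjb, i, hi, k, hk, hij, hjk⟩
      have hjl : j < l.length := by rw [← hlen]; exact letterAt_lt hj
      have hjr : j ∈ (Finset.range l.length : Finset ℕ) := by simpa using hjl
      refine h (e j) (by rw [← hlet j hjl]; exact hj) ⟨?_, e i, Finset.mem_image_of_mem _ hi, e k,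
        Finset.mem_image_of_mem _ hk, hmono (hb hi) hjr hij, hmono hjr (hb hk) hjk⟩
      intro hc
      obtain ⟨u, hu, huj⟩ := Finset.mem_image.1 hc
      exact hjb (hmono.injOn (hb hu) hjr huj ▸ hu)
    · rintro h j hj ⟨hjb, i', hi', k', hk', hij, hjk⟩
      obtain ⟨i, hi, rfl⟩ := Finset.mem_image.1 hi'
      obtain ⟨k, hk, rfl⟩ := Finset.mem_image.1 hk'
      have hjg : j ∈ g := by
        by_contra hjg
        refine hg j hj hjg ⟨e i, ?_, e k, ?_, hij, hjk⟩
        · rw [← himg]; exact Finset.mem_image_of_mem _ (hb hi)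
        · rw [← himg]; exact Finset.mem_image_of_mem _ (hb hk)
      rw [← himg] at hjg
      obtain ⟨j, hjr, rfl⟩ := Finset.mem_image.1 hjg
      refine h j (by rw [hlet j (by simpa using hjr)]; exact hj) ⟨fun hc => hjb (Finset.mem_image_of_mem _ hc),
        i, hi, k, hk, (hmono.lt_iff_lt (hb hi) hjr).1 hij, (hmono.lt_iff_lt hjr (hb hk)).1 hjk⟩
  unfold phi
  rw [hw]
  by_cases h : Good s (b.image e)
  · rw [if_pos h, if_pos (hgood.1 h)]
  · rw [if_neg h, if_neg (fun h' => h (hgood.2 h'))]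

lemma sum_pc (J : Finset ℕ) (f : ℕ → ℂ) :
    ∑ A ∈ J.powerset, f A.card =
      ∑ c ∈ Finset.range (J.card + 1), (J.card.choose c : ℂ) * f c := by
  rw [Finset.sum_powerset_apply_card f]
  simp

lemma wordOf_union (s : Word) (A B : Finset ℕ) (h : ∀ i ∈ A, ∀ k ∈ B, i < k) :
    wordOf s (A ∪ B) = wordOf s A ++ wordOf s B := by
  unfold wordOf
  rw [← List.map_append]
  congr 1
  refine sort_eq_of _ _ ?_ (by simp)
  rw [List.pairwise_append]
  exact ⟨(Finset.sortedLT_sort A).pairwise, (Finset.sortedLT_sort B).pairwise,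
    fun i hi k hk => h i (by simpa using hi) k (by simpa using hk)⟩

lemma wordOf_z (s : Word) (A : Finset ℕ) (h : ∀ i ∈ A, letterAt s i = Letter.z) :
    wordOf s A = List.replicate A.card Letter.z := by
  unfold wordOf
  rw [List.eq_replicate_iff]
  refine ⟨by simp, ?_⟩
  intro x hx
  obtain ⟨i, hi, rfl⟩ := List.mem_map.1 hx
  exact h i (by simpa using hi)

lemma wordOf_single (s : Word) (j : ℕ) : wordOf s {j} = [letterAt s j] := by
  simp [wordOf]

lemma wordOf_Ico (s : Word) (p : ℕ) : wordOf s (Finset.Ico p s.length) = s.drop p := by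
  unfold wordOf
  rw [sort_eq_of _ (List.range' p (s.length - p)) List.pairwise_lt_range'
    (by intro x; simp [List.mem_range'_1]; omega)]
  refine List.ext_getElem (by simp) ?_
  intro i h1 h2
  simp at h2
  simp [letterAt, show p + i < s.length by omega]

/-- Admissible continuation of an open block. -/
def Init (s : Word) (p : ℕ) (A : Finset ℕ) : Prop :=
  ∀ j, p ≤ j → letterAt s j = Letter.w → j ∉ A → ∀ k ∈ A, k < j

open scoped Classical in
noncomputable def XX (L : Word → ℂ) (s q : Word) (p : ℕ) : ℂ :=
  ∑ A ∈ (Finset.Ico p s.length).powerset,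
    if Init s p A then L (q ++ wordOf s A) * ZZ (phi L s) (Finset.Ico p s.length \ A) else 0

lemma letterAt_drop (s : Word) (p i : ℕ) : letterAt (s.drop p) i = letterAt s (p + i) := by
  simp [letterAt]

lemma letterAt_rep (s r : Word) (p a i : ℕ) (h : s.drop p = List.replicate a Letter.z ++ r)
    (h1 : p ≤ i) (h2 : i < p + a) : letterAt s i = Letter.z := by
  obtain ⟨d, rfl⟩ := Nat.exists_eq_add_of_le h1
  rw [← letterAt_drop, h]
  simp [letterAt, List.getElem?_append, show d < a by omega]

lemma letterAt_w (s r : Word) (p a : ℕ)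
    (h : s.drop p = List.replicate a Letter.z ++ Letter.w :: r) : letterAt s (p + a) = Letter.w := by
  rw [← letterAt_drop, h]
  simp [letterAt]

lemma length_of_drop (s r : Word) (p a : ℕ)
    (h : s.drop p = List.replicate a Letter.z ++ Letter.w :: r) :
    s.length = p + a + 1 + r.length := by
  have := congrArg List.length h
  simp at this
  omega

lemma drop_w (s r : Word) (p a : ℕ)
    (h : s.drop p = List.replicate a Letter.z ++ Letter.w :: r) :
    s.drop (p + a) = Letter.w :: r := by
  rw [← List.drop_drop, h, List.drop_left' (by simp)]

lemma drop_r (s r : Word) (p a : ℕ)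
    (h : s.drop p = List.replicate a Letter.z ++ Letter.w :: r) :
    s.drop (p + a + 1) = r := by
  rw [← List.drop_drop, drop_w s r p a h]
  rfl

open scoped Classical in
lemma term2 (M L : Word → ℂ) (hM1 : M [] = 1) (hL : IsCumulants M L) (s r q : Word) (p a : ℕ)
    (h : s.drop p = List.replicate a Letter.z ++ Letter.w :: r) :
    (∑ A ∈ (Finset.Ico p (p + a)).powerset, ∑ B ∈ (Finset.Ico (p + a + 1) s.length).powerset,
      if Init s (p + a + 1) B then
        L (q ++ (wordOf s (A ∪ insert (p + a) B))) *
          ZZ (phi L s) (Finset.Ico p s.length \ (A ∪ insert (p + a) B)) else 0) =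
    ∑ c ∈ Finset.range (a + 1), (a.choose c : ℂ) * (M (List.replicate (a - c) Letter.z) *
      XX L s (q ++ (List.replicate c Letter.z ++ [Letter.w])) (p + a + 1)) := by
  have hlen := length_of_drop s r p a h
  have hw := letterAt_w s r p a h
  have hz : ∀ i, p ≤ i → i < p + a → letterAt s i = Letter.z := fun i h1 h2 =>
    letterAt_rep s _ p a i h h1 h2
  have key : ∀ A ∈ (Finset.Ico p (p + a)).powerset,
      (∑ B ∈ (Finset.Ico (p + a + 1) s.length).powerset,
      if Init s (p + a + 1) B then
        L (q ++ (wordOf s (A ∪ insert (p + a) B))) *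
          ZZ (phi L s) (Finset.Ico p s.length \ (A ∪ insert (p + a) B)) else 0) =
      (fun c => (M (List.replicate (a - c) Letter.z) *
      XX L s (q ++ (List.replicate c Letter.z ++ [Letter.w])) (p + a + 1))) A.card := by
    intro A hA
    rw [Finset.mem_powerset] at hA
    have hA' : ∀ i ∈ A, p ≤ i ∧ i < p + a := fun i hi => by simpa using hA hi
    simp only [XX]
    rw [Finset.mul_sum]
    refine Finset.sum_congr rfl ?_
    intro B hB
    rw [Finset.mem_powerset] at hB
    have hB' : ∀ i ∈ B, p + a + 1 ≤ i ∧ i < s.length := fun i hi => by simpa using hB hi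
    split_ifs with hI
    · have e1 : wordOf s (A ∪ insert (p + a) B) =
          List.replicate A.card Letter.z ++ [Letter.w] ++ wordOf s B := by
        rw [wordOf_union, Finset.insert_eq, wordOf_union, wordOf_single, hw, wordOf_z s A]
        · simp
        · intro i hi; exact hz i (hA' i hi).1 (hA' i hi).2
        · intro i hi k hk
          have := hB' k hk
          simp at hi
          omega
        · intro i hi k hk
          have := hA' i hi
          rcases Finset.mem_insert.1 hk with rfl | hk
          · omega
          · have := hB' k hk
            omega
      have e2 : Finset.Ico p s.length \ (A ∪ insert (p + a) B) =
          (Finset.Ico p (p + a) \ A) ∪ (Finset.Ico (p + a + 1) s.length \ B) := by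
        ext i
        simp only [Finset.mem_sdiff, Finset.mem_Ico, Finset.mem_union, Finset.mem_insert]
        have u := hA' i
        have v := hB' i
        by_cases hiA : i ∈ A
        · have := u hiA
          simp only [hiA]
          constructor
          · rintro ⟨_, h⟩; simp at h
          · rintro (h | h)
            · simp at h
            · omega
        · by_cases hiB : i ∈ B
          · have := v hiB
            simp only [hiA, hiB]
            constructor
            · rintro ⟨_, h⟩; simp at h
            · rintro (h | h)
              · omega
              · simp at h
          · simp only [hiA, hiB]
            simp
            omega
      have e3 : ZZ (phi L s) (Finset.Ico p (p + a) \ A) =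
          M (List.replicate (a - A.card) Letter.z) := by
        rw [relabel M L hM1 hL, wordOf_z, Finset.card_sdiff_of_subset hA]
        · simp
        · intro i hi
          simp at hi
          exact hz i hi.1.1 hi.1.2
        · rintro j hj _ ⟨i, hi, k, hk, hij, hjk⟩
          simp at hi hk
          rw [hz j (by omega) (by omega)] at hj
          cases hj
      rw [e1, e2, ZZ_union _ _ _ _ rfl, e3]
      · simp only [List.append_assoc]
        ring
      · rw [Finset.disjoint_left]
        intro i hi hi'
        simp at hi hi'
        omega
      · intro b hb hb1 hb2
        rw [phi, if_neg]
        intro hgood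
        obtain ⟨i, hi, hi'⟩ := Finset.not_subset.1 hb2
        obtain ⟨k, hk, hk'⟩ := Finset.not_subset.1 hb1
        have hi2 := (Finset.mem_union.1 (hb hi)).resolve_right hi'
        have hk2 := (Finset.mem_union.1 (hb hk)).resolve_left hk'
        simp at hi2 hk2
        refine hgood (p + a) hw ⟨?_, i, hi, k, hk, by omega, by omega⟩
        intro hc
        have := hb hc
        simp at this
    · simp
  rw [Finset.sum_congr rfl key, sum_pc _ (fun c => M (List.replicate (a - c) Letter.z) *
    XX L s (q ++ (List.replicate c Letter.z ++ [Letter.w])) (p + a + 1))]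
  simp

lemma XX_z (M L : Word → ℂ) (hM1 : M [] = 1) (hL : IsCumulants M L) (s q : Word) (p a : ℕ)
    (hp : p ≤ s.length) (h : s.drop p = List.replicate a Letter.z) :
    XX L s q p = ∑ c ∈ Finset.range (a + 1), (a.choose c : ℂ) *
      (L (q ++ List.replicate c Letter.z) * M (List.replicate (a - c) Letter.z)) := by
  classical
  have hlen : s.length = p + a := by
    have := congrArg List.length h
    simp at this
    omega
  have hz : ∀ i, p ≤ i → i < p + a → letterAt s i = Letter.z := fun i h1 h2 =>
    letterAt_rep s [] p a i (by simpa using h) h1 h2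
  have key : ∀ A ∈ (Finset.Ico p s.length).powerset,
      (if Init s p A then L (q ++ wordOf s A) * ZZ (phi L s) (Finset.Ico p s.length \ A) else 0) =
      (fun c => (L (q ++ List.replicate c Letter.z) * M (List.replicate (a - c) Letter.z))) A.card := by
    intro A hA
    rw [Finset.mem_powerset] at hA
    have hA' : ∀ i ∈ A, p ≤ i ∧ i < p + a := fun i hi => by simpa [hlen] using hA hi
    rw [if_pos]
    · rw [relabel M L hM1 hL, wordOf_z s A, wordOf_z, Finset.card_sdiff_of_subset hA]
      · simp [hlen]
      · intro i hi
        simp [hlen] at hi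
        exact hz i hi.1.1 hi.1.2
      · intro i hi
        exact hz i (hA' i hi).1 (hA' i hi).2
      · rintro j hj _ ⟨i, hi, k, hk, hij, hjk⟩
        simp at hi hk
        rw [hz j (by omega) (by omega)] at hj
        cases hj
    · intro j hj hjw
      have := letterAt_lt hjw
      rw [hz j hj (by omega)] at hjw
      cases hjw
  rw [XX, Finset.sum_congr rfl key, sum_pc _ (fun c => L (q ++ List.replicate c Letter.z) * M (List.replicate (a - c) Letter.z))]
  simp [hlen]

lemma Ico_split (p a n : ℕ) (h : p + a < n) :
    Finset.Ico p n = Finset.Ico p (p + a) ∪ insert (p + a) (Finset.Ico (p + a + 1) n) := by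
  ext i
  simp
  omega

lemma XX_w (M L : Word → ℂ) (hM1 : M [] = 1) (hL : IsCumulants M L) (s r q : Word) (p a : ℕ)
    (h : s.drop p = List.replicate a Letter.z ++ Letter.w :: r) :
    XX L s q p = ∑ c ∈ Finset.range (a + 1), (a.choose c : ℂ) *
        (M (List.replicate (a - c) Letter.z) *
          XX L s (q ++ (List.replicate c Letter.z ++ [Letter.w])) (p + a + 1)) +
      ∑ c ∈ Finset.range (a + 1), (a.choose c : ℂ) *
      (L (q ++ List.replicate c Letter.z) *
        M (List.replicate (a - c) Letter.z ++ Letter.w :: r)) := by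
  classical
  have hlen := length_of_drop s r p a h
  have hw := letterAt_w s r p a h
  have hz : ∀ i, p ≤ i → i < p + a → letterAt s i = Letter.z := fun i h1 h2 =>
    letterAt_rep s _ p a i h h1 h2
  rw [← term2 M L hM1 hL s r q p a h]
  have key : ∀ A ∈ (Finset.Ico p (p + a)).powerset,
      (∑ B ∈ (insert (p + a) (Finset.Ico (p + a + 1) s.length)).powerset,
        if Init s p (A ∪ B) then L (q ++ wordOf s (A ∪ B)) *
          ZZ (phi L s) (Finset.Ico p s.length \ (A ∪ B)) else 0) =
      (∑ B ∈ (Finset.Ico (p + a + 1) s.length).powerset,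
      if Init s (p + a + 1) B then
        L (q ++ (wordOf s (A ∪ insert (p + a) B))) *
          ZZ (phi L s) (Finset.Ico p s.length \ (A ∪ insert (p + a) B)) else 0) +
      (fun c => L (q ++ List.replicate c Letter.z) *
        M (List.replicate (a - c) Letter.z ++ Letter.w :: r)) A.card := by
    intro A hA
    rw [Finset.mem_powerset] at hA
    have hA' : ∀ i ∈ A, p ≤ i ∧ i < p + a := fun i hi => by simpa using hA hi
    rw [Finset.sum_powerset_insert (by simp), add_comm]
    congr 1
    · refine Finset.sum_congr rfl ?_
      intro B hB
      rw [Finset.mem_powerset] at hB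
      have hB' : ∀ i ∈ B, p + a + 1 ≤ i ∧ i < s.length := fun i hi => by simpa using hB hi
      have : Init s p (A ∪ insert (p + a) B) ↔ Init s (p + a + 1) B := by
        constructor
        · intro hI j hj hjw hjB k hk
          refine hI j (by omega) hjw ?_ k (by simp [hk])
          intro hc
          rcases Finset.mem_union.1 hc with hc | hc
          · have := hA' j hc
            omega
          · rcases Finset.mem_insert.1 hc with hc | hc
            · omega
            · exact hjB hc
        · intro hI j hj hjw hjB k hk
          have hja : p + a < j := by
            by_contra hcon
            rcases Nat.lt_or_ge j (p + a) with h1 | h1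
            · rw [hz j hj h1] at hjw
              cases hjw
            · apply hjB
              have : j = p + a := by omega
              simp [this]
          rcases Finset.mem_union.1 hk with hc | hc
          · have := hA' k hc
            omega
          · rcases Finset.mem_insert.1 hc with hc | hc
            · omega
            · exact hI j hja hjw (fun hc => hjB (by simp [hc])) k hc
      by_cases hI : Init s p (A ∪ insert (p + a) B)
      · rw [if_pos hI, if_pos (this.1 hI)]
      · rw [if_neg hI, if_neg (fun h' => hI (this.2 h'))]
    · rw [Finset.sum_eq_single ∅]
      · rw [if_pos]
        · rw [Finset.union_empty, wordOf_z s A (fun i hi => hz i (hA' i hi).1 (hA' i hi).2),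
            relabel M L hM1 hL]
          · congr 2
            have e2 : Finset.Ico p s.length \ A =
                (Finset.Ico p (p + a) \ A) ∪ Finset.Ico (p + a) s.length := by
              ext i
              simp only [Finset.mem_sdiff, Finset.mem_Ico, Finset.mem_union]
              have u := hA' i
              by_cases hiA : i ∈ A
              · have := u hiA
                simp [hiA]
                omega
              · simp [hiA]
                omega
            rw [e2, wordOf_union, wordOf_Ico, drop_w s r p a h, wordOf_z,
              Finset.card_sdiff_of_subset hA]
            · simp
            · intro i hi
              simp at hi
              exact hz i hi.1.1 hi.1.2
            · intro i hi k hk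
              simp at hi hk
              omega
          · rintro j hj hjn ⟨i, hi, k, hk, hij, hjk⟩
            simp at hi hk hjn
            have := hA' j (hjn (by omega) (by omega))
            rw [hz j this.1 this.2] at hj
            cases hj
        · intro j hj hjw _ k hk
          have := hA' k (by simpa using hk)
          by_contra hcon
          rw [hz j hj (by omega)] at hjw
          cases hjw
      · intro B hB hne
        rw [Finset.mem_powerset] at hB
        have hB' : ∀ i ∈ B, p + a + 1 ≤ i ∧ i < s.length := fun i hi => by simpa using hB hi
        rw [if_neg]
        intro hI
        obtain ⟨k, hk⟩ := Finset.nonempty_iff_ne_empty.2 hne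
        have h1 := hI (p + a) (by omega) hw ?_ k (by simp [hk])
        · have := hB' k hk
          omega
        · intro hc
          rcases Finset.mem_union.1 hc with hc | hc
          · have := hA' _ hc
            omega
          · have := hB' _ hc
            omega
      · simp
  rw [XX]
  conv_lhs => rw [Ico_split p a s.length (by omega)]
  rw [sum_powerset_disj _ _ (by
    rw [Finset.disjoint_left]
    intro i hi
    simp at hi ⊢
    omega)]
  rw [← Ico_split p a s.length (by omega), Finset.sum_congr rfl key, Finset.sum_add_distrib,
    sum_pc _ (fun c => L (q ++ List.replicate c Letter.z) *
        M (List.replicate (a - c) Letter.z ++ Letter.w :: r))]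
  simp

lemma M_w (M L : Word → ℂ) (hM1 : M [] = 1) (hL : IsCumulants M L) (r : Word) (a : ℕ) (s : Word)
    (hs : s = List.replicate a Letter.z ++ Letter.w :: r) :
    M s = ∑ c ∈ Finset.range (a + 1), (a.choose c : ℂ) *
        (M (List.replicate (a - c) Letter.z) *
          XX L s (List.replicate c Letter.z ++ [Letter.w]) (a + 1)) := by
  classical
  have h : s.drop 0 = List.replicate a Letter.z ++ Letter.w :: r := by simpa using hs
  have hlen := length_of_drop s r 0 a h
  have hw := letterAt_w s r 0 a h
  have hz : ∀ i, 0 ≤ i → i < 0 + a → letterAt s i = Letter.z := fun i h1 h2 =>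
    letterAt_rep s _ 0 a i h h1 h2
  have ht := term2 M L hM1 hL s r [] 0 a h
  simp only [List.nil_append, Nat.zero_add] at ht hw hlen hz
  rw [← ht, M_eq_ZZ M L hM1 hL, ZZ_rec _ _ a (by simp; omega), Finset.sum_filter,
    Finset.range_eq_Ico]
  conv_lhs =>
    enter [1]
    rw [show Finset.Ico 0 s.length = Finset.Ico 0 a ∪ insert a (Finset.Ico (a + 1) s.length) by
      simpa using Ico_split 0 a s.length (by omega)]
  rw [sum_powerset_disj _ _ (by
    rw [Finset.disjoint_left]
    intro i hi
    simp at hi ⊢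
    omega)]
  refine Finset.sum_congr rfl ?_
  intro A hA
  rw [Finset.mem_powerset] at hA
  have hA' : ∀ i ∈ A, i < a := fun i hi => by simpa using hA hi
  rw [Finset.sum_powerset_insert (by simp)]
  rw [Finset.sum_eq_zero, zero_add]
  · refine Finset.sum_congr rfl ?_
    intro B hB
    rw [Finset.mem_powerset] at hB
    have hB' : ∀ i ∈ B, a + 1 ≤ i ∧ i < s.length := fun i hi => by simpa using hB hi
    rw [if_pos (by simp)]
    have : Good s (A ∪ insert a B) ↔ Init s (a + 1) B := by
      constructor
      · intro hG j hj hjw hjB k hk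
        by_contra hcon
        have hkj : k ≠ j := by rintro rfl; exact hjB hk
        refine hG j hjw ⟨?_, a, by simp, k, by simp [hk], by omega, by omega⟩
        intro hc
        rcases Finset.mem_union.1 hc with hc | hc
        · have := hA' j hc
          omega
        · rcases Finset.mem_insert.1 hc with hc | hc
          · omega
          · exact hjB hc
      · rintro hI j hjw ⟨hjn, i, hi, k, hk, hij, hjk⟩
        have hja : a < j := by
          by_contra hcon
          rcases Nat.lt_or_ge j a with h1 | h1
          · rw [hz j (by omega) h1] at hjw
            cases hjw
          · apply hjn
            have : j = a := by omega
            simp [this]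
        have hkB : k ∈ B := by
          rcases Finset.mem_union.1 hk with hc | hc
          · have := hA' k hc
            omega
          · rcases Finset.mem_insert.1 hc with hc | hc
            · omega
            · exact hc
        have := hI j hja hjw (fun hc => hjn (by simp [hc])) k hkB
        omega
    unfold phi
    by_cases hI : Good s (A ∪ insert a B)
    · rw [if_pos hI, if_pos (this.1 hI)]
    · rw [if_neg hI, if_neg (fun h' => hI (this.2 h')), zero_mul]
  · intro B hB
    rw [Finset.mem_powerset] at hB
    rw [if_neg]
    intro hc
    rcases Finset.mem_union.1 hc with hc | hc
    · have := hA' _ hc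
      omega
    · have := hB hc
      simp at this

abbrev zs (a : ℕ) : Word := List.replicate a Letter.z

lemma runInd {P : Word → Prop} (h0 : ∀ a, P (zs a)) (h1 : ∀ a r, P r → P (zs a ++ Letter.w :: r)) :
    ∀ s, P s := by
  have key : ∀ s : Word, ∀ a, P (zs a ++ s) := by
    intro s
    induction s with
    | nil => intro a; simpa using h0 a
    | cons x s ih =>
      intro a
      cases x with
      | z =>
        have := ih (a + 1)
        rwa [zs, List.replicate_succ', List.append_assoc] at this
      | w => exact h1 a s (by simpa using ih 0)
  intro s
  simpa using key s 0

lemma nFact_z (a : ℕ) : nFact (zs a) = a.factorial := by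
  unfold nFact
  rw [List.splitOn_eq_singleton (by simp [zs])]
  simp

lemma nFact_append (u v : Word) : nFact (u ++ Letter.w :: v) = nFact u * nFact v := by
  unfold nFact
  rw [List.splitOn_append_cons_self]
  simp

lemma nFact_ne (s : Word) : (nFact s : ℂ) ≠ 0 := by
  unfold nFact
  rw [Nat.cast_ne_zero]
  intro h
  rw [List.prod_eq_zero_iff] at h
  obtain ⟨x, _, hx⟩ := List.mem_map.1 h
  exact Nat.factorial_ne_zero _ hx

noncomputable def cv (f g : ℕ → ℂ) (a : ℕ) : ℂ := ∑ c ∈ Finset.range (a + 1), f c * g (a - c)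

lemma cv_eq (f g : ℕ → ℂ) : PowerSeries.mk (cv f g) = PowerSeries.mk f * PowerSeries.mk g := by
  ext a
  rw [PowerSeries.coeff_mul, PowerSeries.coeff_mk, cv,
    Finset.Nat.sum_antidiagonal_eq_sum_range_succ_mk]
  simp

lemma cv_inj {f g : ℕ → ℂ} (h : PowerSeries.mk f = PowerSeries.mk g) : f = g := by
  ext a
  have := congrArg (PowerSeries.coeff a) h
  simpa using this

lemma cv_cancel (t g Y : ℕ → ℂ) (h : PowerSeries.mk t * PowerSeries.mk g = 1) :
    cv (cv Y t) g = Y := by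
  apply cv_inj
  rw [cv_eq, cv_eq, mul_assoc, h, mul_one]

lemma cv_assoc (f g h : ℕ → ℂ) : cv (cv f g) h = cv f (cv g h) := by
  apply cv_inj
  rw [cv_eq, cv_eq, cv_eq, cv_eq, mul_assoc]

/-- The normalised sums over the open block. -/
noncomputable def xw (Lg m : Word → ℂ) : Word → Word → ℕ → ℂ
  | [], q, a => cv (fun c => Lg (q ++ zs c)) (fun b => m (zs b)) a
  | Letter.z :: s, q, a => xw Lg m s q (a + 1)
  | Letter.w :: s, q, a =>
      cv (fun c => xw Lg m s (q ++ (zs c ++ [Letter.w])) 0) (fun b => m (zs b)) a +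
      cv (fun c => Lg (q ++ zs c)) (fun b => m (zs b ++ Letter.w :: s)) a

lemma xw_zs (Lg m : Word → ℂ) (s q : Word) (a b : ℕ) :
    xw Lg m (zs b ++ s) q a = xw Lg m s q (a + b) := by
  induction b generalizing a with
  | zero => simp
  | succ b ih =>
    rw [zs, List.replicate_succ, List.cons_append, xw, ih]
    congr 1; omega

lemma xw_z (Lg m : Word → ℂ) (q : Word) (a : ℕ) :
    xw Lg m (zs a) q 0 = cv (fun c => Lg (q ++ zs c)) (fun b => m (zs b)) a := by
  have := xw_zs Lg m [] q 0 a
  rw [List.append_nil] at this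
  rw [this, xw, zero_add]

lemma xw_w (Lg m : Word → ℂ) (q r : Word) (a : ℕ) :
    xw Lg m (zs a ++ Letter.w :: r) q 0 =
      cv (fun c => xw Lg m r (q ++ (zs c ++ [Letter.w])) 0) (fun b => m (zs b)) a +
      cv (fun c => Lg (q ++ zs c)) (fun b => m (zs b ++ Letter.w :: r)) a := by
  rw [xw_zs, xw, zero_add]

/-- The star operation. -/
noncomputable def st (g : ℕ → ℂ) : Word → ℕ → (Word → ℂ) → ℂ
  | [], a, f => f (zs a)
  | Letter.z :: s, a, f => st g s (a + 1) f
  | Letter.w :: s, a, f => cv (fun c => st g s 0 (fun t => f (zs c ++ Letter.w :: t))) g a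

lemma st_zs (g : ℕ → ℂ) (s : Word) (a b : ℕ) (f : Word → ℂ) :
    st g (zs b ++ s) a f = st g s (a + b) f := by
  induction b generalizing a with
  | zero => simp
  | succ b ih =>
    rw [zs, List.replicate_succ, List.cons_append, st, ih]
    congr 1; omega

lemma st_z (g : ℕ → ℂ) (a : ℕ) (f : Word → ℂ) : st g (zs a) 0 f = f (zs a) := by
  have := st_zs g [] 0 a f
  rw [List.append_nil] at this
  rw [this, st, zero_add]

lemma st_w (g : ℕ → ℂ) (r : Word) (a : ℕ) (f : Word → ℂ) :
    st g (zs a ++ Letter.w :: r) 0 f =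
      cv (fun c => st g r 0 (fun t => f (zs c ++ Letter.w :: t))) g a := by
  rw [st_zs, st, zero_add]

lemma st_add (g : ℕ → ℂ) (s : Word) (a : ℕ) (f f' : Word → ℂ) :
    st g s a (fun t => f t + f' t) = st g s a f + st g s a f' := by
  induction s generalizing a f f' with
  | nil => rfl
  | cons x s ih =>
    cases x with
    | z => rw [st, ih]; rfl
    | w => simp only [st, cv, ih, ← Finset.sum_add_distrib, add_mul]

lemma st_sum (g : ℕ → ℂ) (s : Word) (a n : ℕ) (k : ℕ → ℂ) (f : ℕ → Word → ℂ) :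
    st g s a (fun t => ∑ i ∈ Finset.range n, k i * f i t) =
      ∑ i ∈ Finset.range n, k i * st g s a (f i) := by
  induction s generalizing a f with
  | nil => rfl
  | cons x s ih =>
    cases x with
    | z => rw [st, ih]; rfl
    | w =>
      simp only [st, cv, ih, Finset.mul_sum, Finset.sum_mul]
      rw [Finset.sum_comm]
      simp only [mul_assoc]

/-- `M`-side recursion. -/
lemma XX_norm (M L : Word → ℂ) (hM1 : M [] = 1) (hL : IsCumulants M L) (Lg : Word → ℂ)
    (hLg : ∀ s : Word, s ≠ [] → Lg s = L s / (nFact s : ℂ)) (s : Word) :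
    ∀ r p q, p ≤ s.length → s.drop p = r →
      XX L s (q ++ [Letter.w]) p =
        (nFact q : ℂ) * nFact r * xw Lg (genFun M) r (q ++ [Letter.w]) 0 := by
  have hLq : ∀ (q : Word) c, L ((q ++ [Letter.w]) ++ zs c) =
      (nFact q : ℂ) * c.factorial * Lg ((q ++ [Letter.w]) ++ zs c) := by
    intro q c
    have hn : (nFact ((q ++ [Letter.w]) ++ zs c) : ℂ) = (nFact q : ℂ) * c.factorial := by
      rw [List.append_assoc, List.singleton_append, nFact_append, nFact_z]
      push_cast; rfl
    rw [hLg _ (by simp), ← hn]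
    exact (mul_div_cancel₀ _ (nFact_ne _)).symm
  have hMg : ∀ u, M u = nFact u * genFun M u := by
    intro u
    rw [genFun]
    exact (mul_div_cancel₀ _ (nFact_ne _)).symm
  have hch : ∀ a, ∀ c ∈ Finset.range (a + 1),
      (a.choose c : ℂ) * c.factorial * (a - c).factorial = a.factorial := by
    intro a c hc
    have := Nat.choose_mul_factorial_mul_factorial (n := a) (k := c) (by simp at hc; omega)
    exact_mod_cast this
  refine runInd ?_ ?_
  · intro a p q hp h
    rw [XX_z M L hM1 hL s _ p a hp h, xw_z, cv, nFact_z, Finset.mul_sum]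
    refine Finset.sum_congr rfl ?_
    intro c hc
    rw [hLq, hMg, nFact_z, ← hch a c hc]
    ring
  · intro a r ih p q hp h
    rw [XX_w M L hM1 hL s r _ p a h, xw_w, cv, cv, nFact_append, nFact_z, mul_add,
      Finset.mul_sum, Finset.mul_sum]
    have hlen := length_of_drop s r p a h
    push_cast
    congr 1
    · refine Finset.sum_congr rfl ?_
      intro c hc
      rw [← List.append_assoc, ih (p + a + 1) _ (by omega) (drop_r s r p a h), hMg, nFact_z,
        ← hch a c hc]
      have : nFact (q ++ [Letter.w] ++ List.replicate c Letter.z) = nFact q * c.factorial := by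
        rw [List.append_assoc, List.singleton_append, nFact_append, ← nFact_z]
      rw [this]
      push_cast
      simp only [List.append_assoc]
      ring
    · refine Finset.sum_congr rfl ?_
      intro c hc
      rw [hLq, hMg, nFact_append, nFact_z, ← hch a c hc]
      push_cast
      ring

lemma M_norm (M L : Word → ℂ) (hM1 : M [] = 1) (hL : IsCumulants M L) (Lg : Word → ℂ)
    (hLg : ∀ s : Word, s ≠ [] → Lg s = L s / (nFact s : ℂ)) (r : Word) (a : ℕ) :
    genFun M (zs a ++ Letter.w :: r) =
      cv (fun c => xw Lg (genFun M) r (zs c ++ [Letter.w]) 0) (fun b => genFun M (zs b)) a := by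
  set s := zs a ++ Letter.w :: r with hs
  have hMg : ∀ u, M u = nFact u * genFun M u := by
    intro u
    rw [genFun]
    exact (mul_div_cancel₀ _ (nFact_ne _)).symm
  have hd : s.drop 0 = zs a ++ Letter.w :: r := by simpa using hs
  have hlen := length_of_drop s r 0 a hd
  have hdr := drop_r s r 0 a hd
  rw [zero_add] at hdr
  rw [genFun, div_eq_iff (nFact_ne s), M_w M L hM1 hL r a s hs, cv, Finset.sum_mul]
  refine Finset.sum_congr rfl ?_
  intro c hc
  rw [XX_norm M L hM1 hL Lg hLg s r (a + 1) (zs c) (by omega) hdr, hMg, hs, nFact_append, nFact_z,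
    nFact_z, nFact_z]
  have := Nat.choose_mul_factorial_mul_factorial (n := a) (k := c) (by simp at hc; omega)
  rw [← this]
  push_cast
  ring

lemma conv_cons (f g : Word → ℂ) (x : Letter) (s : Word) :
    conv f g (x :: s) = f [] * g (x :: s) + conv (fun t => f (x :: t)) g s := by
  unfold conv
  rw [List.length_cons, Finset.sum_range_succ']
  simp only [List.take_succ_cons, List.drop_succ_cons, List.take_zero, List.drop_zero]
  ring

lemma conv_lin (f f' g : Word → ℂ) (k : ℂ) (s : Word) :
    conv (fun t => k * f t + f' t) g s = k * conv f g s + conv f' g s := by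
  simp only [conv, Finset.mul_sum, ← Finset.sum_add_distrib]
  refine Finset.sum_congr rfl ?_
  intros
  ring

lemma conv_assoc (f g h : Word → ℂ) (s : Word) :
    conv (conv f g) h s = conv f (conv g h) s := by
  induction s generalizing f with
  | nil => simp [conv, mul_assoc]
  | cons x s ih =>
    rw [conv_cons, conv_cons f]
    simp only [conv_cons f g]
    rw [conv_lin, ih, conv_cons g h]
    simp [conv]
    ring

lemma conv_one (f g : Word → ℂ) (hg : ∀ s, g s = if s = [] then 1 else 0) (s : Word) :
    conv f g s = f s := by
  unfold conv
  rw [Finset.sum_range_succ, Finset.sum_eq_zero]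
  · simp [hg]
  · intro i hi
    rw [hg, if_neg, mul_zero]
    simp at hi ⊢
    omega

lemma conv_split (f g : Word → ℂ) (a : ℕ) (r : Word) :
    conv f g (zs a ++ Letter.w :: r) =
      cv (fun c => f (zs c)) (fun b => g (zs b ++ Letter.w :: r)) a +
      conv (fun t => f (zs a ++ [Letter.w] ++ t)) g r := by
  induction a generalizing f with
  | zero => simp [conv_cons, cv]
  | succ a ih =>
    rw [show zs (a + 1) = Letter.z :: zs a from List.replicate_succ, List.cons_append, conv_cons, ih,
      ← add_assoc]
    congr 1
    rw [cv, cv, Finset.sum_range_succ' _ (a + 1), add_comm]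
    congr 1
    · refine Finset.sum_congr rfl ?_
      intro c _
      rw [show zs (c + 1) = Letter.z :: zs c from List.replicate_succ, Nat.add_sub_add_right]

lemma conv_zs (f g : Word → ℂ) (a : ℕ) :
    conv f g (zs a) = cv (fun c => f (zs c)) (fun b => g (zs b)) a := by
  unfold conv cv
  simp only [zs, List.length_replicate]
  refine Finset.sum_congr rfl ?_
  intro c hc
  simp at hc
  rw [List.take_replicate, List.drop_replicate, min_eq_left (by omega)]

lemma headw (r : Word) : ∃ k rest, r = List.replicate k Letter.w ++ rest ∧
    rest.head? ≠ some Letter.w := by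
  induction r with
  | nil => exact ⟨0, [], by simp⟩
  | cons x r ih =>
    cases x with
    | z => exact ⟨0, Letter.z :: r, by simp⟩
    | w =>
      obtain ⟨k, rest, rfl, h⟩ := ih
      exact ⟨k + 1, rest, by simp [List.replicate_succ], h⟩

lemma G_one (f gg : Word → ℂ) (h1 : gg [] = 1) (G : Word → Word → ℂ) (hG : IsStarAux f gg G)
    (pre : Word) (a : ℕ) (r : Word) :
    G pre (zs a ++ Letter.w :: r) =
      cv (fun c => G (pre ++ (zs c ++ [Letter.w])) r) (fun b => gg (zs b)) a := by
  obtain ⟨k, rest, rfl, hr⟩ := headw r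
  have := hG.2 pre a (k + 1) rest (by omega) hr
  rw [List.replicate_succ, List.append_assoc, List.cons_append] at this
  rw [zs, this, cv]
  refine Finset.sum_congr rfl ?_
  intro c _
  rw [mul_comm]
  congr 1
  rcases Nat.eq_zero_or_pos k with rfl | hk
  · simp
  · have := hG.2 (pre ++ (zs c ++ [Letter.w])) 0 k rest hk hr
    simp [h1] at this
    simp [this]

lemma G_st (f gg : Word → ℂ) (h1 : gg [] = 1) (G : Word → Word → ℂ) (hG : IsStarAux f gg G) :
    ∀ (s pre : Word), G pre s = st (fun b => gg (zs b)) s 0 (fun t => f (pre ++ t)) := by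
  refine runInd ?_ ?_
  · intro a pre
    rw [st_z, hG.1 pre _ (by simp [zs])]
  · intro a r ih pre
    rw [G_one f gg h1 G hG, st_w]
    simp only [ih]
    simp

lemma claimA (Lg m : Word → ℂ) (g : ℕ → ℂ)
    (hinv : PowerSeries.mk (fun b => m (zs b)) * PowerSeries.mk g = 1) :
    ∀ s q : Word, st g s 0 (fun t => xw Lg m t q 0) =
      conv (fun u => Lg (q ++ u)) (fun v => st g v 0 m) s := by
  refine runInd ?_ ?_
  · intro a q
    rw [st_z, xw_z, conv_zs]
    simp only [st_z]
  · intro a r ih q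
    rw [st_w, conv_split]
    simp only [xw_w, st_add]
    have e1 : ∀ c, st g r 0 (fun t => cv (fun c' => xw Lg m t (q ++ (zs c' ++ [Letter.w])) 0)
        (fun b => m (zs b)) c) =
        cv (fun c' => st g r 0 (fun t => xw Lg m t (q ++ (zs c' ++ [Letter.w])) 0))
          (fun b => m (zs b)) c := by
      intro c
      have := st_sum g r 0 (c + 1) (fun i => m (zs (c - i)))
        (fun i t => xw Lg m t (q ++ (zs i ++ [Letter.w])) 0)
      simp only [cv]
      simp only [mul_comm _ (m _)]
      exact this
    have e2 : ∀ c, st g r 0 (fun t => cv (fun c' => Lg (q ++ zs c'))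
        (fun b => m (zs b ++ Letter.w :: t)) c) =
        cv (fun c' => Lg (q ++ zs c')) (fun b => st g r 0 (fun t => m (zs b ++ Letter.w :: t))) c := by
      intro c
      exact st_sum g r 0 (c + 1) (fun i => Lg (q ++ zs i))
        (fun i t => m (zs (c - i) ++ Letter.w :: t))
    simp only [e1, e2]
    have e3 : ∀ (f1 f2 : ℕ → ℂ), cv (fun c => f1 c + f2 c) g a = cv f1 g a + cv f2 g a := by
      intro f1 f2
      simp only [cv, add_mul, Finset.sum_add_distrib]
    rw [e3, add_comm]
    congr 1
    · have := congrFun (cv_assoc (fun c' => Lg (q ++ zs c'))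
        (fun b => st g r 0 (fun t => m (zs b ++ Letter.w :: t))) g) a
      refine this.trans ?_
      congr 1
      ext b
      rw [st_w]
    · have := congrFun (cv_cancel (fun b => m (zs b)) g
        (fun c' => st g r 0 (fun t => xw Lg m t (q ++ (zs c' ++ [Letter.w])) 0)) hinv) a
      refine this.trans ?_
      simp only [ih]
      simp

lemma star_main (M L : Word → ℂ) (hM1 : M [] = 1) (hL : IsCumulants M L) (Lg : Word → ℂ)
    (hLg : ∀ s : Word, s ≠ [] → Lg s = L s / (nFact s : ℂ)) (g : ℕ → ℂ)
    (hinv : PowerSeries.mk (fun b => genFun M (zs b)) * PowerSeries.mk g = 1) :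
    ∀ s : Word, st g s 0 (genFun M) = restrZ (genFun M) s +
      conv (deltaF Lg) (fun v => st g v 0 (genFun M)) s := by
  have hd : ∀ c, deltaF Lg (zs c) = 0 := by
    intro c; simp [deltaF, zs]
  refine runInd ?_ ?_
  · intro a
    rw [conv_zs, st_z]
    simp only [hd, cv, zero_mul, Finset.sum_const_zero, add_zero]
    simp [restrZ, zs]
  · intro a r _
    rw [conv_split, st_w]
    have h1 : restrZ (genFun M) (zs a ++ Letter.w :: r) = 0 := by simp [restrZ]
    have h2 : ∀ t, deltaF Lg (zs a ++ [Letter.w] ++ t) = Lg (zs a ++ [Letter.w] ++ t) := by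
      intro t; simp [deltaF]
    simp only [h1, h2, hd]
    have h3 : ∀ f : ℕ → ℂ, cv (fun _ => 0) f a = 0 := by intro f; simp [cv]
    rw [h3, zero_add, zero_add, ← claimA Lg (genFun M) g hinv]
    simp only [M_norm M L hM1 hL Lg hLg]
    have e1 : ∀ c, st g r 0 (fun t => cv (fun c' => xw Lg (genFun M) t (zs c' ++ [Letter.w]) 0)
        (fun b => genFun M (zs b)) c) =
        cv (fun c' => st g r 0 (fun t => xw Lg (genFun M) t (zs c' ++ [Letter.w]) 0))
          (fun b => genFun M (zs b)) c := by
      intro c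
      have := st_sum g r 0 (c + 1) (fun i => genFun M (zs (c - i)))
        (fun i t => xw Lg (genFun M) t (zs i ++ [Letter.w]) 0)
      simp only [cv]
      simp only [mul_comm _ (genFun M _)]
      exact this
    simp only [e1]
    exact congrFun (cv_cancel (fun b => genFun M (zs b)) g
        (fun c' => st g r 0 (fun t => xw Lg (genFun M) t (zs c' ++ [Letter.w]) 0)) hinv) a

end Helpers

/-- `L{z,w} = L{z,0} + (M⋆{z,w} − M{z,0}) ⋆ M⋆⁻¹{z,w}` in `A(S)`,
where `M⋆{z,w} = (M{z,w})_{⋆ M⁻¹{z,0}}`. -/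
theorem cumulant_generating_function_formula (M L : Word → ℂ)
    (hM1 : M [] = 1) (hL : IsCumulants M L)
    (Lgen : Word → ℂ) (hLgen : Lgen [] = 0)
    (hLgen' : ∀ s : Word, s ≠ [] → Lgen s = L s / (nFact s : ℂ))
    (Minv0 : Word → ℂ) (hMinv0supp : ∀ s : Word, Letter.w ∈ s → Minv0 s = 0)
    (hMinv0₁ : ∀ s : Word, conv (restrZ (genFun M)) Minv0 s = if s = [] then 1 else 0)
    (hMinv0₂ : ∀ s : Word, conv Minv0 (restrZ (genFun M)) s = if s = [] then 1 else 0)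
    (G : Word → Word → ℂ) (hG : IsStarAux (genFun M) Minv0 G)
    (Mstarinv : Word → ℂ)
    (hMsi₁ : ∀ s : Word, conv (fun t => G [] t) Mstarinv s = if s = [] then 1 else 0)
    (hMsi₂ : ∀ s : Word, conv Mstarinv (fun t => G [] t) s = if s = [] then 1 else 0) :
    ∀ s : Word,
      Lgen s =
        restrZ Lgen s +
          conv (fun t => G [] t - restrZ (genFun M) t) Mstarinv s := by
  intro s
  have hg1 : Minv0 [] = 1 := by
    have := hMinv0₁ []
    simp [conv, restrZ, genFun, hM1, nFact] at this
    exact this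
  have hinv : PowerSeries.mk (fun b => genFun M (zs b)) *
      PowerSeries.mk (fun b => Minv0 (zs b)) = 1 := by
    rw [← cv_eq]
    ext n
    have := hMinv0₁ (zs n)
    rw [conv_zs] at this
    have hr : ∀ c, restrZ (genFun M) (zs c) = genFun M (zs c) := by
      intro c; simp [restrZ, zs]
    simp only [hr] at this
    rw [PowerSeries.coeff_mk, this, PowerSeries.coeff_one]
    simp [zs]
  have hGs : ∀ t, G [] t = st (fun b => Minv0 (zs b)) t 0 (genFun M) := by
    intro t
    have := G_st _ _ hg1 G hG t []
    simpa using this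
  have hmain : (fun t => G [] t - restrZ (genFun M) t) =
      conv (deltaF Lgen) (fun t => G [] t) := by
    funext t
    have := star_main M L hM1 hL Lgen hLgen' _ hinv t
    simp only [hGs]
    rw [sub_eq_iff_eq_add, this]
    ring
  rw [hmain, conv_assoc, conv_one _ _ hMsi₁]
  unfold restrZ deltaF
  split_ifs <;> simp
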